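/- arXiv:2005.05492 — 2 statements merged into one kernel-verified Lean document; each statement's English description precedes it below -/
import Mathlib

section
/- Let n ≥ 3 and let V be the real vector space of n×n real matrices with zero diagonal, equipped with the Frobenius inner product ⟨A,B⟩ = Σ_{i≠j} A_{ij} B_{ij}. If φ : V → V is a linear bijection that preserves the norm induced by this inner product and satisfies φ(Ê_n) = Ê_n, then there exists a permutation π of Fin n such that either φ(A)_{π(i)π(j)} = A_{ij} for all A ∈ V and all i ≠ j, or φ(A)_{π(i)π(j)} = A_{ji} for all A ∈ V and all i ≠ j. (The symmetry group of Ê_n is S_n × ℤ₂.) -/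
/-- The cone of quasi-semimetrics on `n` points. -/
def QSM (n : ℕ) : Set (Fin n → Fin n → ℝ) :=
  {A | (∀ i, A i i = 0) ∧ (∀ i j : Fin n, i ≠ j → 0 ≤ A i j) ∧
    (∀ i j k : Fin n, i ≠ j → j ≠ k → i ≠ k → A i k ≤ A i j + A j k)}

/-- The space `V` of real `n × n` matrices with zero diagonal. -/
def ZeroDiag (n : ℕ) : Submodule ℝ (Fin n → Fin n → ℝ) where
  carrier := {A | ∀ i, A i i = 0}
  add_mem' := by
    intro a b ha hb i
    simp [Pi.add_apply, ha i, hb i]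
  zero_mem' := by intro i; rfl
  smul_mem' := by
    intro c a ha i
    simp [Pi.smul_apply, ha i]


open scoped Topology

set_option linter.unusedSimpArgs false
set_option linter.unusedVariables false

namespace QS

variable {n : ℕ}

/-- Frobenius inner product. -/
def ip (A B : ZeroDiag n) : ℝ :=
  ∑ i, ∑ j, (A : Fin n → Fin n → ℝ) i j * (B : Fin n → Fin n → ℝ) i j

lemma ip_comm (A B : ZeroDiag n) : ip A B = ip B A := by
  simp only [ip, mul_comm]

lemma ip_add (A B C : ZeroDiag n) : ip A (B + C) = ip A B + ip A C := by
  simp [ip, mul_add, Finset.sum_add_distrib]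

lemma ip_smul (A B : ZeroDiag n) (c : ℝ) : ip A (c • B) = c * ip A B := by
  simp [ip, Finset.mul_sum, mul_left_comm]

lemma ip_sub (A B C : ZeroDiag n) : ip A (B - C) = ip A B - ip A C := by
  simp [ip, mul_sub, Finset.sum_sub_distrib]

lemma add_ip (A B C : ZeroDiag n) : ip (B + C) A = ip B A + ip C A := by
  rw [ip_comm, ip_add, ip_comm A, ip_comm A]

lemma sub_ip (A B C : ZeroDiag n) : ip (B - C) A = ip B A - ip C A := by
  rw [ip_comm, ip_sub, ip_comm A, ip_comm A]

lemma smul_ip (A B : ZeroDiag n) (c : ℝ) : ip (c • A) B = c * ip A B := by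
  rw [ip_comm, ip_smul, ip_comm B]

lemma ip_self_nonneg (A : ZeroDiag n) : 0 ≤ ip A A :=
  Finset.sum_nonneg fun _ _ => Finset.sum_nonneg fun _ _ => mul_self_nonneg _

lemma ip_self_eq_zero {A : ZeroDiag n} (h : ip A A = 0) : A = 0 := by
  unfold ip at h
  rw [Finset.sum_eq_zero_iff_of_nonneg
    (fun _ _ => Finset.sum_nonneg fun _ _ => mul_self_nonneg _)] at h
  ext i j
  have h1 := h i (Finset.mem_univ _)
  rw [Finset.sum_eq_zero_iff_of_nonneg (fun _ _ => mul_self_nonneg _)] at h1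
  simpa using h1 j (Finset.mem_univ _)

lemma ip_self_pos {A : ZeroDiag n} (h : A ≠ 0) : 0 < ip A A :=
  lt_of_le_of_ne (ip_self_nonneg A) fun h' => h (ip_self_eq_zero h'.symm)

/-- Matrix units (zero on the diagonal). -/
def E (i j : Fin n) : ZeroDiag n :=
  ⟨fun a b => if a = i ∧ b = j ∧ i ≠ j then 1 else 0, by
    intro a
    simp only [ite_eq_right_iff]
    rintro ⟨h1, h2, h3⟩
    exact absurd (h1.symm.trans h2) h3⟩

lemma E_apply (i j a b : Fin n) :
    (E i j : Fin n → Fin n → ℝ) a b = if a = i ∧ b = j ∧ i ≠ j then 1 else 0 := rfl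

lemma ip_E (i j : Fin n) (A : ZeroDiag n) : ip (E i j) A = (A : Fin n → Fin n → ℝ) i j := by
  by_cases hij : i = j
  · subst hij
    have : (A : Fin n → Fin n → ℝ) i i = 0 := A.2 i
    simp [ip, E_apply, this]
  · unfold ip
    rw [Finset.sum_eq_single i, Finset.sum_eq_single j]
    · simp [E_apply, hij]
    · intro b _ hb
      simp [E_apply, hb]
    · simp
    · intro b _ hb
      simp [E_apply, hb]
    · simp

/-- Triangle normals. -/
def T (i j k : Fin n) : ZeroDiag n := E i j + E j k - E i k

lemma ip_T (i j k : Fin n) (A : ZeroDiag n) : ip (T i j k) A =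
    (A : Fin n → Fin n → ℝ) i j + (A : Fin n → Fin n → ℝ) j k - (A : Fin n → Fin n → ℝ) i k := by
  simp [T, sub_ip, add_ip, ip_E]

lemma T_apply (i j k a b : Fin n) : (T i j k : Fin n → Fin n → ℝ) a b =
    (E i j : Fin n → Fin n → ℝ) a b + (E j k : Fin n → Fin n → ℝ) a b
      - (E i k : Fin n → Fin n → ℝ) a b := rfl

/-- The set of facet normals. -/
def S (n : ℕ) : Set (ZeroDiag n) :=
  {M | (∃ i j, i ≠ j ∧ M = E i j) ∨ (∃ i j k, i ≠ j ∧ j ≠ k ∧ i ≠ k ∧ M = T i j k)}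

lemma S_finite : (S n).Finite := by
  refine Set.Finite.subset ((Set.finite_range (fun p : Fin n × Fin n => E p.1 p.2)).union
    (Set.finite_range (fun p : Fin n × Fin n × Fin n => T p.1 p.2.1 p.2.2))) ?_
  rintro M (⟨i, j, _, rfl⟩ | ⟨i, j, k, _, _, _, rfl⟩)
  · exact Or.inl ⟨(i, j), rfl⟩
  · exact Or.inr ⟨(i, j, k), rfl⟩

/-- The cone. -/
def C (n : ℕ) : Set (ZeroDiag n) := {A | ∀ M ∈ S n, 0 ≤ ip M A}

lemma mem_C (A : ZeroDiag n) : A ∈ C n ↔ (A : Fin n → Fin n → ℝ) ∈ QSM n := by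
  constructor
  · intro h
    refine ⟨A.2, fun i j hij => ?_, fun i j k h1 h2 h3 => ?_⟩
    · have := h _ (Or.inl ⟨i, j, hij, rfl⟩)
      rwa [ip_E] at this
    · have := h _ (Or.inr ⟨i, j, k, h1, h2, h3, rfl⟩)
      rw [ip_T] at this
      linarith
  · rintro ⟨-, h1, h2⟩ M (⟨i, j, hij, rfl⟩ | ⟨i, j, k, hij, hjk, hik, rfl⟩)
    · rw [ip_E]; exact h1 i j hij
    · rw [ip_T]; linarith [h2 i j k hij hjk hik]

/-- Facet normals, intrinsically. -/
def Facet (Y : ZeroDiag n) : Prop :=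
  Y ≠ 0 ∧ (∀ X ∈ C n, 0 ≤ ip Y X) ∧ ∃ X ∈ C n, ip Y X = 0 ∧
    ∀ Z, ip Y Z = 0 → ∃ ε : ℝ, 0 < ε ∧ X + ε • Z ∈ C n

lemma exists_eps (X Z : ZeroDiag n)
    (h : ∀ M ∈ S n, 0 < ip M X ∨ (ip M X = 0 ∧ ip M Z = 0)) :
    ∃ ε : ℝ, 0 < ε ∧ X + ε • Z ∈ C n := by
  have key : ∀ᶠ ε : ℝ in 𝓝[>] 0, ∀ M ∈ S n, 0 ≤ ip M (X + ε • Z) := by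
    rw [Filter.eventually_all_finite S_finite]
    intro M hM
    rcases h M hM with h1 | ⟨h1, h2⟩
    · have hc : Filter.Tendsto (fun ε : ℝ => ip M X + ε * ip M Z) (𝓝[>] 0) (𝓝 (ip M X)) := by
        have : Continuous (fun ε : ℝ => ip M X + ε * ip M Z) := by fun_prop
        have := this.tendsto 0
        simp only [zero_mul, add_zero] at this
        exact this.mono_left nhdsWithin_le_nhds
      filter_upwards [hc.eventually (lt_mem_nhds h1)] with ε hε
      rw [ip_add, ip_smul]
      exact hε.le
    · refine Filter.Eventually.of_forall fun ε => ?_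
      rw [ip_add, ip_smul, h1, h2]
      simp
  obtain ⟨ε, h1, h2⟩ := (key.and self_mem_nhdsWithin).exists
  exact ⟨ε, h2, h1⟩

lemma facet_of {N X : ZeroDiag n} (hN : N ∈ S n) (h0 : N ≠ 0) (hX : ip N X = 0)
    (h : ∀ M ∈ S n, M ≠ N → 0 < ip M X) : Facet N := by
  refine ⟨h0, fun A hA => hA N hN, X, ?_, hX, ?_⟩
  · intro M hM
    by_cases hMN : M = N
    · rw [hMN, hX]
    · exact (h M hM hMN).le
  · intro Z hZ
    apply exists_eps
    intro M hM
    by_cases hMN : M = N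
    · right; rw [hMN]; exact ⟨hX, hZ⟩
    · exact Or.inl (h M hM hMN)

/-- The all-ones point. -/
def P (n : ℕ) : ZeroDiag n := ⟨fun a b => if a = b then 0 else 1, by intro a; simp⟩

lemma P_pos : ∀ M ∈ S n, 0 < ip M (P n) := by
  rintro M (⟨i, j, hij, rfl⟩ | ⟨i, j, k, hij, hjk, hik, rfl⟩)
  · rw [ip_E]; simp [P, hij]
  · rw [ip_T]; simp [P, hij, hjk, hik]

lemma of_facet {Y : ZeroDiag n} (hY : Facet Y) : ∃ N ∈ S n, ∃ c : ℝ, 0 < c ∧ N = c • Y := by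
  obtain ⟨h0, hnn, X, hX, hYX, hZ⟩ := hY
  have hYY := ip_self_pos h0
  have h1 : ∃ N ∈ S n, ip N X = 0 := by
    by_contra! hcon
    obtain ⟨ε, hε, hm⟩ := exists_eps X ((-1 : ℝ) • Y)
      (fun M hM => Or.inl (lt_of_le_of_ne (hX M hM) (hcon M hM).symm))
    have := hnn _ hm
    rw [ip_add, ip_smul, ip_smul, hYX] at this
    nlinarith
  obtain ⟨N, hN, hNX⟩ := h1
  set c := ip N Y / ip Y Y with hc
  have hcY : c * ip Y Y = ip N Y := by rw [hc]; field_simp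
  set Z := N - c • Y with hZdef
  have hYZ : ip Y Z = 0 := by
    rw [hZdef, ip_sub, ip_smul, hcY, ip_comm]; ring
  have hNZ : ip N Z = 0 := by
    obtain ⟨ε, hε, hm⟩ := hZ Z hYZ
    obtain ⟨δ, hδ, hm'⟩ := hZ ((-1 : ℝ) • Z) (by rw [ip_smul, hYZ]; ring)
    have a := hm N hN
    have b := hm' N hN
    rw [ip_add, ip_smul, hNX] at a
    rw [ip_add, ip_smul, ip_smul, hNX] at b
    have a' : 0 ≤ ip N Z := nonneg_of_mul_nonneg_right (by linarith) hε
    have b' : 0 ≤ -1 * ip N Z := nonneg_of_mul_nonneg_right (by linarith) hδ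
    linarith
  have hZ0 : Z = 0 := by
    apply ip_self_eq_zero
    nth_rewrite 1 [hZdef]
    rw [sub_ip, smul_ip, hYZ, hNZ]; ring
  have hNc : N = c • Y := sub_eq_zero.mp hZ0
  refine ⟨N, hN, c, ?_, hNc⟩
  have p := P_pos N hN
  have q := hnn (P n) (fun M hM => (P_pos M hM).le)
  rw [hNc, smul_ip] at p
  by_contra! hneg
  nlinarith

lemma E_ne_zero {i j : Fin n} (h : i ≠ j) : E i j ≠ 0 := by
  intro h'
  have := ip_E i j (E i j)
  rw [h'] at this
  have h2 : ip (0 : ZeroDiag n) 0 = 0 := by simp [ip]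
  rw [h2, ← h', E_apply] at this
  simp [h] at this

lemma ip_EE (i j : Fin n) (h : i ≠ j) : ip (E i j) (E i j) = 1 := by
  rw [ip_E, E_apply]; simp [h]

lemma ip_TT (i j k : Fin n) (h1 : i ≠ j) (h2 : j ≠ k) (h3 : i ≠ k) :
    ip (T i j k) (T i j k) = 3 := by
  rw [ip_T]; simp only [T_apply, E_apply]
  simp [h1, h2, h3, h1.symm, h2.symm, h3.symm]; norm_num

lemma ip_TT' (i j k : Fin n) (h1 : i ≠ j) (h2 : j ≠ k) (h3 : i ≠ k) :
    ip (T i j k) (T i k j) = -2 := by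
  rw [ip_T]; simp only [T_apply, E_apply]
  simp [h1, h2, h3, h1.symm, h2.symm, h3.symm]; norm_num

lemma T_ne_zero {i j k : Fin n} (h1 : i ≠ j) (h2 : j ≠ k) (h3 : i ≠ k) : T i j k ≠ 0 := by
  intro h
  have := ip_TT i j k h1 h2 h3
  rw [h] at this
  simp [ip] at this

/-- Relative interior point of the facet of `E i j`. -/
def XE (i j : Fin n) : ZeroDiag n :=
  ⟨fun a b => if a = b then 0 else if a = i ∧ b = j then 0 else
    if a = i ∨ b = j then 2 else 3, by intro a; simp⟩

lemma facet_E {i j : Fin n} (h : i ≠ j) : Facet (E i j) := by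
  apply facet_of (X := XE i j) (Or.inl ⟨i, j, h, rfl⟩) (E_ne_zero h)
  · rw [ip_E]; simp [XE]
  · rintro M (⟨a, b, hab, rfl⟩ | ⟨a, b, c, hab, hbc, hac, rfl⟩) hne
    · have : ¬ (a = i ∧ b = j) := by rintro ⟨rfl, rfl⟩; exact hne rfl
      rw [ip_E]; simp only [XE, hab, this, if_false]
      split_ifs <;> norm_num
    · rw [ip_T]; simp only [XE, hab, hbc, hac, if_false]
      clear hne
      split_ifs <;> first | (norm_num; done) | (exfalso; grind)

/-- Relative interior point of the facet of `T i j k`. -/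
def XT (i j k : Fin n) : ZeroDiag n :=
  ⟨fun a b => if a = b then 0 else if a = i ∧ b = j then 2 else if a = j ∧ b = k then 2 else
    if a = i ∧ b = k then 4 else 3, by intro a; simp⟩

lemma facet_T {i j k : Fin n} (h1 : i ≠ j) (h2 : j ≠ k) (h3 : i ≠ k) : Facet (T i j k) := by
  apply facet_of (X := XT i j k) (Or.inr ⟨i, j, k, h1, h2, h3, rfl⟩) (T_ne_zero h1 h2 h3)
  · rw [ip_T]; simp [XT, h1, h2, h3, h1.symm, h2.symm, h3.symm]; norm_num
  · rintro M (⟨a, b, hab, rfl⟩ | ⟨a, b, c, hab, hbc, hac, rfl⟩) hne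
    · rw [ip_E]; simp only [XT, hab, if_false]
      split_ifs <;> norm_num
    · have : ¬ (a = i ∧ b = j ∧ c = k) := by rintro ⟨rfl, rfl, rfl⟩; exact hne rfl
      rw [ip_T]; simp only [XT, hab, hbc, hac, if_false]
      clear hne
      split_ifs <;> first | (norm_num; done) | (exfalso; grind)

lemma facet_S {M : ZeroDiag n} (hM : M ∈ S n) : Facet M := by
  rcases hM with (⟨a, b, hab, rfl⟩ | ⟨a, b, c, hab, hbc, hac, rfl⟩)
  · exact facet_E hab
  · exact facet_T hab hbc hac

lemma facet_map (f : ZeroDiag n ≃ₗ[ℝ] ZeroDiag n) (hip : ∀ A B, ip (f A) (f B) = ip A B)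
    (hC : ∀ A, f A ∈ C n ↔ A ∈ C n) {Y : ZeroDiag n} (hY : Facet Y) : Facet (f Y) := by
  obtain ⟨h0, hnn, X, hX, hYX, hZ⟩ := hY
  refine ⟨by simpa using h0, ?_, f X, (hC X).2 hX, by rw [hip, hYX], ?_⟩
  · intro A hA
    obtain ⟨B, rfl⟩ := f.surjective A
    rw [hip]; exact hnn B ((hC B).1 hA)
  · intro Z hz
    obtain ⟨B, rfl⟩ := f.surjective Z
    rw [hip] at hz
    obtain ⟨ε, hε, h⟩ := hZ B hz
    refine ⟨ε, hε, ?_⟩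
    rw [← map_smul, ← map_add]
    exact (hC _).2 h

lemma map_S (f : ZeroDiag n ≃ₗ[ℝ] ZeroDiag n) (hip : ∀ A B, ip (f A) (f B) = ip A B)
    (hC : ∀ A, f A ∈ C n ↔ A ∈ C n) {M : ZeroDiag n} (hM : M ∈ S n) :
    ∃ N ∈ S n, ∃ c : ℝ, 0 < c ∧ N = c • f M :=
  of_facet (facet_map f hip hC (facet_S hM))

lemma T_ge (a b c i j : Fin n) (hab : a ≠ b) (hbc : b ≠ c) (hac : a ≠ c) :
    -1 ≤ (T a b c : Fin n → Fin n → ℝ) i j := by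
  rw [T_apply, E_apply, E_apply, E_apply]
  split_ifs <;> norm_num

lemma map_E (f : ZeroDiag n ≃ₗ[ℝ] ZeroDiag n) (hip : ∀ A B, ip (f A) (f B) = ip A B)
    (hC : ∀ A, f A ∈ C n ↔ A ∈ C n) {i j : Fin n} (h : i ≠ j) :
    ∃ p q, p ≠ q ∧ f (E i j) = E p q := by
  obtain ⟨M, hM, c, hc, hMc⟩ := map_S f hip hC (Or.inl ⟨i, j, h, rfl⟩ : E i j ∈ S n)
  have hn : ip M M = c * c := by
    rw [hMc, smul_ip, ip_smul, hip, ip_EE i j h]; ring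
  rcases hM with (⟨a, b, hab, rfl⟩ | ⟨a, b, d, hab, hbd, had, rfl⟩)
  · rw [ip_EE a b hab] at hn
    have : c = 1 := by nlinarith
    rw [this, one_smul] at hMc
    exact ⟨a, b, hab, hMc.symm⟩
  · exfalso
    rw [ip_TT a b d hab hbd had] at hn
    have hip' : ∀ A B, ip (f.symm A) (f.symm B) = ip A B := by
      intro A B; rw [← hip]; simp
    have hC' : ∀ A, f.symm A ∈ C n ↔ A ∈ C n := by
      intro A; rw [← hC]; simp
    obtain ⟨M', hM', e, he, hMe⟩ := map_S f.symm hip' hC'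
      (Or.inr ⟨a, d, b, had, hbd.symm, hab, rfl⟩ : T a d b ∈ S n)
    have hn' : ip M' M' = e * e * 3 := by
      rw [hMe, smul_ip, ip_smul, hip', ip_TT a d b had hbd.symm hab]; ring
    have hx : c * (M' : Fin n → Fin n → ℝ) i j = e * (-2) := by
      rw [← ip_E, hMe, ip_smul, ← hip, LinearEquiv.apply_symm_apply,
        ← ip_TT' a b d hab hbd had, hMc, smul_ip]
      ring
    rcases hM' with (⟨x, y, hxy, rfl⟩ | ⟨x, y, z, hxy, hyz, hxz, rfl⟩)
    · have : 0 ≤ (E x y : Fin n → Fin n → ℝ) i j := by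
        rw [E_apply]; split_ifs <;> norm_num
      nlinarith [mul_nonneg hc.le this]
    · rw [ip_TT x y z hxy hyz hxz] at hn'
      have he1 : e = 1 := by nlinarith
      have := T_ge x y z i j hxy hyz hxz
      subst he1
      nlinarith

lemma map_T (f : ZeroDiag n ≃ₗ[ℝ] ZeroDiag n) (hip : ∀ A B, ip (f A) (f B) = ip A B)
    (hC : ∀ A, f A ∈ C n ↔ A ∈ C n) {i j k : Fin n} (h1 : i ≠ j) (h2 : j ≠ k) (h3 : i ≠ k) :
    ∃ a b c, a ≠ b ∧ b ≠ c ∧ a ≠ c ∧ f (T i j k) = T a b c := by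
  obtain ⟨M, hM, c, hc, hMc⟩ := map_S f hip hC
    (Or.inr ⟨i, j, k, h1, h2, h3, rfl⟩ : T i j k ∈ S n)
  have hn : ip M M = c * c * 3 := by
    rw [hMc, smul_ip, ip_smul, hip, ip_TT i j k h1 h2 h3]; ring
  rcases hM with (⟨a, b, hab, rfl⟩ | ⟨a, b, d, hab, hbd, had, rfl⟩)
  · exfalso
    rw [ip_EE a b hab] at hn
    obtain ⟨p, q, hpq, hE⟩ := map_E f hip hC h1
    have : ip (E p q) (E a b) = c := by
      rw [hMc, ip_smul, ← hE, hip, ip_E, T_apply]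
      simp [E_apply, h1, h2, h3, h1.symm, h2.symm, h3.symm]
    rw [ip_E, E_apply] at this
    split_ifs at this <;> subst this <;> norm_num at hn
  · rw [ip_TT a b d hab hbd had] at hn
    have : c = 1 := by nlinarith
    rw [this, one_smul] at hMc
    exact ⟨a, b, d, hab, hbd, had, hMc.symm⟩

lemma extract {p q p' q' p'' q'' a b c : Fin n} (hp : p ≠ q) (hp' : p' ≠ q') (hp'' : p'' ≠ q'')
    (hab : a ≠ b) (hbc : b ≠ c) (hac : a ≠ c)
    (h : E p q + E p' q' - E p'' q'' = T a b c) :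
    (q = p' ∧ p = p'' ∧ q' = q'') ∨ (p = q' ∧ q = q'' ∧ p' = p'') := by
  have key : ∀ x y, (E p q : Fin n → Fin n → ℝ) x y + (E p' q' : Fin n → Fin n → ℝ) x y
      - (E p'' q'' : Fin n → Fin n → ℝ) x y = (T a b c : Fin n → Fin n → ℝ) x y := by
    intro x y; rw [← h]; rfl
  simp only [T_apply, E_apply, hp, hp', hp'', hab, hbc, hac, ne_eq, not_false_eq_true,
    and_true] at key
  have k1 := key a c
  simp only [hac, hab, hab.symm, hbc, hbc.symm, hac.symm, and_true, true_and, and_false,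
    and_self, if_false, if_true] at k1
  have e : a = p'' ∧ c = q'' := by
    by_contra hcon
    rw [if_neg hcon] at k1
    split_ifs at k1 <;> norm_num at k1
  obtain ⟨rfl, rfl⟩ := e
  have k2 := key a b
  have k3 := key b c
  simp only [hac, hab, hab.symm, hbc, hbc.symm, hac.symm, and_true, true_and, and_false,
    false_and, and_self, if_false, if_true] at k2 k3
  clear key h k1
  split_ifs at k2 k3 <;> first | (exfalso; norm_num at k2; done) | (exfalso; norm_num at k3; done) | grind

lemma comb_fwd (hn : 3 ≤ n) (s t : Fin n → Fin n → Fin n)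
    (hne : ∀ i j, i ≠ j → s i j ≠ t i j)
    (hF : ∀ i j k, i ≠ j → j ≠ k → i ≠ k → t i j = s j k ∧ s i j = s i k ∧ t j k = t i k) :
    ∃ π : Equiv.Perm (Fin n), ∀ i j, i ≠ j → s i j = π i ∧ t i j = π j := by
  have third : ∀ i j : Fin n, ∃ k, i ≠ k ∧ j ≠ k := by
    intro i j
    have : ({i, j} : Finset (Fin n)).card < (Finset.univ : Finset (Fin n)).card := by
      have := Finset.card_le_two (a := i) (b := j)
      simp; omega
    obtain ⟨k, _, hk⟩ := Finset.exists_mem_notMem_of_card_lt_card this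
    simp at hk
    exact ⟨k, fun h => hk.1 h.symm, fun h => hk.2 h.symm⟩
  choose o ho _ using fun i => third i i
  have hs : ∀ i j, i ≠ j → s i j = s i (o i) := by
    intro i j hij
    by_cases h : j = o i
    · rw [← h]
    · exact (hF i j (o i) hij h (ho i)).2.1
  have ht : ∀ i j, i ≠ j → t i j = s j (o j) := by
    intro i j hij
    obtain ⟨k, hik, hjk⟩ := third i j
    rw [(hF i j k hij hjk hik).1, hs j k hjk]
  have hinj : Function.Injective (fun i => s i (o i)) := by
    intro i j h
    by_contra hij
    apply hne i j hij
    rw [hs i j hij, ht i j hij]; exact h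
  exact ⟨Equiv.ofBijective _ (Finite.injective_iff_bijective.mp hinj),
    fun i j hij => ⟨hs i j hij, ht i j hij⟩⟩

lemma comb_prop (s t : Fin n → Fin n → Fin n)
    (hne : ∀ i j, i ≠ j → s i j ≠ t i j)
    (hT : ∀ i j k, i ≠ j → j ≠ k → i ≠ k →
      (t i j = s j k ∧ s i j = s i k ∧ t j k = t i k) ∨
      (s i j = t j k ∧ t i j = t i k ∧ s j k = s i k))
    (a b c : Fin n) (hab : a ≠ b) (hbc : b ≠ c) (hac : a ≠ c)
    (h0 : t a b = s b c ∧ s a b = s a c ∧ t b c = t a c) :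
    ∀ i j k, i ≠ j → j ≠ k → i ≠ k → t i j = s j k ∧ s i j = s i k ∧ t j k = t i k := by
  set F : Fin n → Fin n → Fin n → Prop := fun i j k =>
    t i j = s j k ∧ s i j = s i k ∧ t j k = t i k with hFdef
  have sw1 : ∀ i j k, i ≠ j → j ≠ k → i ≠ k → F i j k → F i k j := by
    intro i j k h1 h2 h3 hf
    rcases hT i k j h3 h2.symm h1 with h | h
    · exact h
    · exfalso
      have := hne j k h2
      have := hne i j h1
      have := hne i k h3
      simp only [hFdef] at hf
      grind
  have sw2 : ∀ i j k, i ≠ j → j ≠ k → i ≠ k → F i j k → F j i k := by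
    intro i j k h1 h2 h3 hf
    rcases hT j i k h1.symm h3 h2 with h | h
    · exact h
    · exfalso
      have := hne j k h2
      have := hne i j h1
      have := hne i k h3
      simp only [hFdef] at hf
      grind
  have ext : ∀ i j k l, i ≠ j → j ≠ k → i ≠ k → i ≠ l → j ≠ l → F i j k → F i j l := by
    intro i j k l h1 h2 h3 h4 h5 hf
    by_cases hkl : k = l
    · rwa [← hkl]
    rcases hT i j l h1 h5 h4 with h | h
    · exact h
    · exfalso
      have := hne j k h2
      have := hne i j h1
      have := hne i k h3
      have := hne i l h4
      have := hne j l h5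
      simp only [hFdef] at hf
      rcases hT i k l h3 hkl h4 with h' | h' <;> grind
  set G : Fin n → Fin n → Prop := fun i j => i ≠ j ∧ ∀ k, j ≠ k → i ≠ k → F i j k with hG
  have ofF : ∀ i j k, i ≠ j → j ≠ k → i ≠ k → F i j k → G i j := fun i j k h1 h2 h3 hf =>
    ⟨h1, fun l h4 h5 => ext i j k l h1 h2 h3 h5 h4 hf⟩
  have Gs : ∀ i j, G i j → G j i := fun i j h =>
    ⟨h.1.symm, fun k h2 h3 => sw2 i j k h.1 h3 h2 (h.2 k h3 h2)⟩
  have Gr : ∀ i j k, G i j → i ≠ k → G i k := by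
    intro i j k h hik
    by_cases hjk : j = k
    · rwa [← hjk]
    · exact ofF i k j hik (Ne.symm hjk) h.1 (sw1 i j k h.1 hjk hik (h.2 k hjk hik))
  have G0 : G a b := ofF a b c hab hbc hac h0
  intro i j k hij hjk hik
  have : G i j := by
    by_cases hai : a = i
    · subst hai; exact Gr a b j G0 hij
    · exact Gr i a j (Gs a i (Gr a b i G0 hai)) hij
  exact this.2 k hjk hik

lemma comb (hn : 3 ≤ n) (s t : Fin n → Fin n → Fin n)
    (hne : ∀ i j, i ≠ j → s i j ≠ t i j)
    (hT : ∀ i j k, i ≠ j → j ≠ k → i ≠ k →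
      (t i j = s j k ∧ s i j = s i k ∧ t j k = t i k) ∨
      (s i j = t j k ∧ t i j = t i k ∧ s j k = s i k)) :
    ∃ π : Equiv.Perm (Fin n), (∀ i j, i ≠ j → s i j = π i ∧ t i j = π j) ∨
      (∀ i j, i ≠ j → t i j = π i ∧ s i j = π j) := by
  have hab : (⟨0, by omega⟩ : Fin n) ≠ ⟨1, by omega⟩ := by simp
  have hbc : (⟨1, by omega⟩ : Fin n) ≠ ⟨2, by omega⟩ := by simp
  have hac : (⟨0, by omega⟩ : Fin n) ≠ ⟨2, by omega⟩ := by simp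
  rcases hT _ _ _ hab hbc hac with h | h
  · obtain ⟨π, hπ⟩ := comb_fwd hn s t hne (comb_prop s t hne hT _ _ _ hab hbc hac h)
    exact ⟨π, Or.inl hπ⟩
  · have hne' : ∀ i j, i ≠ j → t i j ≠ s i j := fun i j hij => (hne i j hij).symm
    obtain ⟨π, hπ⟩ := comb_fwd hn t s hne' (comb_prop t s hne'
      (fun i j k h1 h2 h3 => (hT i j k h1 h2 h3).symm) _ _ _ hab hbc hac h)
    exact ⟨π, Or.inr hπ⟩

lemma main (hn : 3 ≤ n) (f : ZeroDiag n ≃ₗ[ℝ] ZeroDiag n)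
    (hip : ∀ A B, ip (f A) (f B) = ip A B) (hC : ∀ A, f A ∈ C n ↔ A ∈ C n) :
    ∃ π : Equiv.Perm (Fin n),
      (∀ A : ZeroDiag n, ∀ i j : Fin n, i ≠ j →
        (f A : Fin n → Fin n → ℝ) (π i) (π j) = (A : Fin n → Fin n → ℝ) i j) ∨
      (∀ A : ZeroDiag n, ∀ i j : Fin n, i ≠ j →
        (f A : Fin n → Fin n → ℝ) (π i) (π j) = (A : Fin n → Fin n → ℝ) j i) := by
  have h : ∀ i j : Fin n, ∃ p q, i ≠ j → (p ≠ q ∧ f (E i j) = E p q) := by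
    intro i j
    by_cases hij : i = j
    · exact ⟨i, i, fun h => absurd hij h⟩
    · obtain ⟨p, q, h⟩ := map_E f hip hC hij
      exact ⟨p, q, fun _ => h⟩
  choose s t hst using h
  obtain ⟨π, hπ⟩ := comb hn s t (fun i j hij => (hst i j hij).1) (by
    intro i j k h1 h2 h3
    obtain ⟨a, b, c, hab, hbc, hac, hT⟩ := map_T f hip hC h1 h2 h3
    rw [T, map_sub, map_add, (hst i j h1).2, (hst j k h2).2, (hst i k h3).2] at hT
    exact extract (hst i j h1).1 (hst j k h2).1 (hst i k h3).1 hab hbc hac hT)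
  refine ⟨π, ?_⟩
  rcases hπ with hπ | hπ
  · left
    intro A i j hij
    rw [← ip_E, ← (hπ i j hij).1, ← (hπ i j hij).2, ← (hst i j hij).2, hip, ip_E]
  · right
    intro A i j hij
    rw [← ip_E, ← (hπ j i hij.symm).1, ← (hπ j i hij.symm).2, ← (hst j i hij.symm).2, hip, ip_E]

end QS

/-- The symmetry group of `Ê_n` is `Sₙ × ℤ₂`: every linear bijection of the space of
zero-diagonal matrices preserving the Frobenius norm and mapping `Ê_n` onto itself is a
coordinate permutation, possibly composed with transposition. -/
theorem stmt1 (n : ℕ) (hn : 3 ≤ n)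
    (φ : ZeroDiag n →ₗ[ℝ] ZeroDiag n) (hbij : Function.Bijective φ)
    (hnorm : ∀ A : ZeroDiag n,
      ∑ i, ∑ j, ((φ A : Fin n → Fin n → ℝ) i j) * ((φ A : Fin n → Fin n → ℝ) i j) =
      ∑ i, ∑ j, ((A : Fin n → Fin n → ℝ) i j) * ((A : Fin n → Fin n → ℝ) i j))
    (hcone : φ '' {A : ZeroDiag n | (A : Fin n → Fin n → ℝ) ∈ QSM n} =
      {A : ZeroDiag n | (A : Fin n → Fin n → ℝ) ∈ QSM n}) :
    ∃ π : Equiv.Perm (Fin n),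
      (∀ A : ZeroDiag n, ∀ i j : Fin n, i ≠ j →
        (φ A : Fin n → Fin n → ℝ) (π i) (π j) = (A : Fin n → Fin n → ℝ) i j) ∨
      (∀ A : ZeroDiag n, ∀ i j : Fin n, i ≠ j →
        (φ A : Fin n → Fin n → ℝ) (π i) (π j) = (A : Fin n → Fin n → ℝ) j i) := by
  have hn2 : ∀ A, QS.ip (φ A) (φ A) = QS.ip A A := hnorm
  have hip : ∀ A B, QS.ip (φ A) (φ B) = QS.ip A B := by
    intro A B
    have h := hn2 (A + B)
    rw [map_add, QS.ip_add, QS.ip_add, QS.add_ip, QS.add_ip, QS.add_ip, QS.add_ip, hn2, hn2,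
      QS.ip_comm (φ B) (φ A)] at h
    have := QS.ip_comm A B
    linarith
  have hC : ∀ A, φ A ∈ QS.C n ↔ A ∈ QS.C n := by
    intro A
    rw [QS.mem_C, QS.mem_C]
    have h := Set.ext_iff.mp hcone (φ A)
    rw [hbij.1.mem_set_image] at h
    exact h.symm
  exact QS.main hn (LinearEquiv.ofBijective φ hbij) hip hC
end

section
/- Let N be a finite type and let C be a subset of the functions N → ℕ such that 0 ∈ C, C is closed under pointwise addition, C is closed under pointwise maximum ⊕, and C is very full: for every i ∈ N, both 𝟙 + e_i and 𝟙 − e_i belong to C. Suppose moreover there is a subgroup G of the group of permutations of N acting transitively on N such that for every π ∈ G and every a ∈ C, the function a ∘ π belongs to C. Then every bijection φ : C → C with φ(u ⊕ v) = φ(u) ⊕ φ(v) for all u, v ∈ C is permutational: there exists a permutation σ of N with φ(a)(σ(i)) = a(i) for every a ∈ C and every i ∈ N. -/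
/-- A pair of mutually inverse monotone self-maps of `C`. -/
structure OIso {N : Type*} (C : Set (N → ℕ)) (φ ψ : (N → ℕ) → (N → ℕ)) : Prop where
  mem : ∀ a ∈ C, φ a ∈ C
  mem' : ∀ a ∈ C, ψ a ∈ C
  left : ∀ a ∈ C, ψ (φ a) = a
  right : ∀ a ∈ C, φ (ψ a) = a
  mono : ∀ a ∈ C, ∀ b ∈ C, a ≤ b → φ a ≤ φ b
  mono' : ∀ a ∈ C, ∀ b ∈ C, a ≤ b → ψ a ≤ ψ b

theorem OIso.symm {N : Type*} {C : Set (N → ℕ)} {φ ψ : (N → ℕ) → (N → ℕ)} (h : OIso C φ ψ) :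
    OIso C ψ φ := ⟨h.mem', h.mem, h.right, h.left, h.mono', h.mono⟩

/-- What is used of `C`. -/
structure Good {N : Type*} (C : Set (N → ℕ)) : Prop where
  zero : (0 : N → ℕ) ∈ C
  sup : ∀ u ∈ C, ∀ v ∈ C, u ⊔ v ∈ C
  const : ∀ k : ℕ, (fun _ => k) ∈ C
  big : ∀ (i : N) (t : ℕ), ∃ a ∈ C, a i = 0 ∧ ∀ j, j ≠ i → a j = t

section
variable {N : Type*} [Fintype N] {C : Set (N → ℕ)} {φ ψ : (N → ℕ) → (N → ℕ)}

/-- Elements of the ideal `a i ≤ k` whose images dominate `c` coordinatewise can be joined. -/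
theorem dominate (hC : Good C) (h : OIso C φ ψ) (i : N) (k : ℕ) (c : N → ℕ) (hc : c ∈ C)
    (H : ∀ l, ∃ a ∈ C, a i ≤ k ∧ φ c l ≤ φ a l) : c i ≤ k := by
  classical
  choose A hA hAk hAl using H
  have key : ∀ s : Finset N, s.sup A ∈ C ∧ (s.sup A) i ≤ k := by
    intro s
    induction s using Finset.induction_on with
    | empty => exact ⟨hC.zero, by simp⟩
    | insert x s hx ih =>
      rw [Finset.sup_insert]
      exact ⟨hC.sup _ (hA x) _ ih.1, sup_le (hAk x) ih.2⟩
  obtain ⟨hm, hk⟩ := key Finset.univ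
  have h1 : φ c ≤ φ (Finset.univ.sup A) := by
    intro l
    exact (hAl l).trans (h.mono _ (hA l) _ hm (Finset.le_sup (Finset.mem_univ l)) l)
  have h2 := h.mono' _ (h.mem _ hc) _ (h.mem _ hm) h1
  rw [h.left _ hc, h.left _ hm] at h2
  exact (h2 i).trans hk

theorem weak (hC : Good C) (h : OIso C φ ψ) (i : N) (k : ℕ) :
    ∃ j m, ∀ a ∈ C, a i ≤ k → φ a j ≤ m := by
  by_contra! H
  have := dominate hC h i k (fun _ => k + 1) (hC.const _) (fun l => by
    obtain ⟨a, ha, hk, hl⟩ := H l (φ (fun _ => k + 1) l)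
    exact ⟨a, ha, hk, hl.le⟩)
  simp at this

theorem sep (hC : Good C) {j l : N} {m m' : ℕ} (H : ∀ b ∈ C, b j ≤ m → b l ≤ m') : l = j := by
  by_contra hne
  obtain ⟨a, ha, h0, h1⟩ := hC.big j (m' + 1)
  have := H a ha (by omega)
  rw [h1 l hne] at this
  omega

/-- the coordinate found by `weak` for `φ` is sent back to `i` -/
theorem back (hC : Good C) (h : OIso C φ ψ) {i j : N} {k m : ℕ}
    (H : ∀ a ∈ C, a i ≤ k → φ a j ≤ m) : ∃ k', ∀ a ∈ C, φ a j ≤ m → a i ≤ k' := by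
  obtain ⟨i', k', hw⟩ := weak hC h.symm j m
  have hi : i' = i := sep hC (j := i) (l := i') (m := k) (m' := k') (fun a ha hk => by
    have := hw (φ a) (h.mem _ ha) (H a ha hk)
    rwa [h.left _ ha] at this)
  subst hi
  refine ⟨k', fun a ha hk => ?_⟩
  have := hw (φ a) (h.mem _ ha) hk
  rwa [h.left _ ha] at this

theorem uniform (hC : Good C) (h : OIso C φ ψ) (i : N) :
    ∃ j, ∀ k, ∃ m, ∀ a ∈ C, a i ≤ k → φ a j ≤ m := by
  obtain ⟨j, m, hj⟩ := weak hC h i 0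
  obtain ⟨k', hk'⟩ := back hC h hj
  refine ⟨j, fun k => ?_⟩
  obtain ⟨l, M, hl⟩ := weak hC h i (max k k')
  have : l = j := sep hC (j := j) (l := l) (m := m) (m' := M) (fun b hb hbj => by
    have h1 := hk' (ψ b) (h.mem' _ hb) (by rwa [h.right _ hb])
    have h2 := hl (ψ b) (h.mem' _ hb) (h1.trans (le_max_right _ _))
    rwa [h.right _ hb] at h2)
  subst this
  exact ⟨M, fun a ha hk => hl a ha (hk.trans (le_max_left _ _))⟩

theorem main_le (hC : Good C) (h : OIso C φ ψ) (i : N) :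
    ∃ j, ∀ a ∈ C, a i ≤ φ a j := by
  classical
  obtain ⟨j, hj⟩ := uniform hC h i
  refine ⟨j, ?_⟩
  have hmin : ∀ k, ∃ m, (∀ a ∈ C, a i ≤ k → φ a j ≤ m) ∧
      ∀ m', (∀ a ∈ C, a i ≤ k → φ a j ≤ m') → m ≤ m' := fun k =>
    ⟨Nat.find (hj k), Nat.find_spec (hj k), fun m' hm' => Nat.find_min' (hj k) hm'⟩
  choose f hf hfmin using hmin
  have hiff : ∀ k, ∀ c ∈ C, φ c j ≤ f k → c i ≤ k := by
    intro k c hc hck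
    apply dominate hC h i k c hc
    intro l
    by_contra! H
    by_cases hl : l = j
    · subst hl
      have h1 := hfmin k (φ c l - 1) (fun a ha hk => by
        have := H a ha hk; omega)
      have := H 0 hC.zero (by simp)
      omega
    · apply hl
      obtain ⟨k', hk'⟩ := back hC h (i := i) (j := l) (k := k) (m := φ c l)
        (fun a ha hk => (H a ha hk).le)
      symm
      exact sep hC (j := l) (l := j) (m := φ c l) (m' := f k') (fun b hb hbl => by
        have h1 := hk' (ψ b) (h.mem' _ hb) (by rwa [h.right _ hb])
        have h2 := hf k' (ψ b) (h.mem' _ hb) h1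
        rwa [h.right _ hb] at h2)
  have hmono : StrictMono f := strictMono_nat_of_lt_succ (fun k => by
    have h1 := hf (k + 1) (fun _ => k + 1) (hC.const _) le_rfl
    by_contra! h2
    have := hiff k (fun _ => k + 1) (hC.const _) (h1.trans h2)
    simp at this)
  intro a ha
  exact hiff (φ a j) a ha (hmono.id_le _)
end

theorem sub_le {N : Type*} [Subsingleton N] {C : Set (N → ℕ)} {φ ψ : (N → ℕ) → (N → ℕ)}
    (h : OIso C φ ψ) (i : N) : ∀ n, ∀ a ∈ C, a i = n → a i ≤ φ a i := by
  have hle : ∀ a b : N → ℕ, a i ≤ b i → a ≤ b := fun a b hab x => by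
    rwa [Subsingleton.elim x i]
  intro n
  induction n using Nat.strong_induction_on with
  | _ n ih =>
    intro a ha han
    by_contra! hlt
    have h1 := ih (φ a i) (han ▸ hlt) (φ a) (h.mem _ ha) rfl
    have h2 := h.mono' _ (h.mem _ ha) _ (h.mem _ (h.mem _ ha)) (hle _ _ h1)
    rw [h.left _ ha, h.left _ (h.mem _ ha)] at h2
    exact absurd (h2 i) (not_le.mpr hlt)


/-- The all-ones vector. -/
def oneVec (N : Type*) : N → ℕ := fun _ => 1

/-- The `i`-th standard basis vector (indicator of `i`). -/
def eVec {N : Type*} [DecidableEq N] (i : N) : N → ℕ := fun j => if j = i then 1 else 0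

/-- If a very full subset of `ℕ^N` closed under `+` and `⊕` is invariant under a
transitive group of coordinate permutations, then every `⊕`-automorphism of it is
permutational. -/
theorem stmt5 {N : Type*} [Fintype N] [DecidableEq N] (C : Set (N → ℕ))
    (h0 : (0 : N → ℕ) ∈ C)
    (hadd : ∀ u ∈ C, ∀ v ∈ C, u + v ∈ C)
    (hmax : ∀ u ∈ C, ∀ v ∈ C, u ⊔ v ∈ C)
    (hvf : ∀ i : N, oneVec N + eVec i ∈ C ∧ oneVec N - eVec i ∈ C)
    (G : Subgroup (Equiv.Perm N))
    (htrans : ∀ i j : N, ∃ π ∈ G, π i = j)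
    (hGinv : ∀ π ∈ G, ∀ a ∈ C, (a ∘ π) ∈ C)
    (φ : (N → ℕ) → (N → ℕ)) (hbij : Set.BijOn φ C C)
    (hhom : ∀ u ∈ C, ∀ v ∈ C, φ (u ⊔ v) = φ u ⊔ φ v) :
    ∃ σ : Equiv.Perm N, ∀ a ∈ C, ∀ i : N, φ a (σ i) = a i := by
  have hC1 : ∀ a ∈ C, φ a ∈ C := fun a ha => hbij.mapsTo ha
  have hinv := hbij.invOn_invFunOn
  have hbij' : Set.MapsTo (Function.invFunOn φ C) C C := hbij.surjOn.mapsTo_invFunOn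
  have h : OIso C φ (Function.invFunOn φ C) := by
    refine ⟨hC1, fun a ha => hbij' ha, fun a ha => hinv.1 ha, fun a ha => hinv.2 ha, ?_, ?_⟩
    · intro a ha b hb hab
      have := hhom a ha b hb
      rw [sup_eq_right.mpr hab] at this
      rw [this]; exact le_sup_left
    · intro a ha b hb hab
      have h1 := hhom _ (hbij' ha) _ (hbij' hb)
      rw [hinv.2 ha, hinv.2 hb, sup_eq_right.mpr hab] at h1
      have h2 : Function.invFunOn φ C a ⊔ Function.invFunOn φ C b = Function.invFunOn φ C b := by
        apply hbij.injOn (hmax _ (hbij' ha) _ (hbij' hb)) (hbij' hb)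
        rw [h1, hinv.2 hb]
      exact sup_eq_right.mp h2
  generalize Function.invFunOn φ C = ψ at h
  rcases subsingleton_or_nontrivial N with hN | hN
  · refine ⟨1, fun a ha i => le_antisymm ?_ ?_⟩
    · have := sub_le h.symm i _ (φ a) (h.mem _ ha) rfl
      rw [h.left _ ha] at this
      exact this
    · exact sub_le h i _ a ha rfl
  · have hsmul : ∀ u ∈ C, ∀ t : ℕ, t • u ∈ C := by
      intro u hu t
      induction t with
      | zero => simpa using h0
      | succ t ih => rw [succ_nsmul]; exact hadd _ ih _ hu
    have hone : oneVec N ∈ C := by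
      obtain ⟨i, j, hij⟩ := exists_pair_ne N
      have := hmax _ (hvf i).2 _ (hvf j).2
      convert this using 1
      funext x
      simp only [oneVec, eVec, Pi.sup_apply, Pi.sub_apply]
      by_cases hx : x = i
      · subst hx; simp [hij]
      · simp [hx]
    have hC : Good C := by
      refine ⟨h0, hmax, fun k => ?_, fun i t => ⟨_, hsmul _ (hvf i).2 t, ?_, ?_⟩⟩
      · convert hsmul _ hone k using 1
        funext x; simp [oneVec]
      · simp [oneVec, eVec]
      · intro j hj
        simp [oneVec, eVec, hj]
    choose σ hσ using main_le hC h
    choose τ hτ using main_le hC h.symm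
    have hid : ∀ i j : N, (∀ a ∈ C, a i ≤ a j) → i = j := fun i j H =>
      sep hC (m := 0) (m' := 0) (fun b hb hj => (H b hb).trans hj)
    have h1 : ∀ i, τ (σ i) = i := fun i => (hid _ _ fun a ha => by
      have := hτ (σ i) (φ a) (h.mem _ ha)
      rw [h.left _ ha] at this
      exact (hσ i a ha).trans this).symm
    have h2 : ∀ i, σ (τ i) = i := fun i => (hid _ _ fun a ha => by
      have := hσ (τ i) (ψ a) (h.mem' _ ha)
      rw [h.right _ ha] at this
      exact (hτ i a ha).trans this).symm
    refine ⟨⟨σ, τ, h1, h2⟩, fun a ha i => le_antisymm ?_ (hσ i a ha)⟩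
    have := hτ (σ i) (φ a) (h.mem _ ha)
    rw [h.left _ ha, h1] at this
    exact this
end
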